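/- Let k and n be positive integers, let E ⊆ ℝ^k be Lebesgue-measurable, and let f : E → ℝ^{2n+1} be Lipschitz as a map from E (Euclidean metric) to (ℝ^{2n+1}, d_K). Let K ⊆ E be measurable and let g : ℝ^k → ℝ^{2n+1} be a C¹ map with g = f on K. Then for Lebesgue-almost every x ∈ K, the image of the derivative Dg_x is contained in the horizontal space H_{f(x)}ℍ^n = ker α(f(x)). -/

import Mathlib

/-!
The Korányi distance controls the contact form quadratically: `|α_q(p - q)| ≤ d_K(p, q)²`. Hence,
if `f` is Lipschitz into `d_K`, the map `y ↦ α_{f x}(f y - f x)` is `O(‖y - x‖²)` along the set, so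
its derivative `α_{f x} ∘ Df_x` vanishes on every direction in which the set accumulates at `x`. At
a Lebesgue density point these are all the directions.
-/

open MeasureTheory Metric Set
open scoped ENNReal NNReal

noncomputable section

abbrev Heis (n : ℕ) := EuclideanSpace ℝ (Fin (2*n+1))
abbrev Horiz (n : ℕ) := EuclideanSpace ℝ (Fin (2*n))

def xIdx (n : ℕ) (j : Fin n) : Fin (2*n+1) := ⟨2*j.1, by have := j.2; omega⟩
def yIdx (n : ℕ) (j : Fin n) : Fin (2*n+1) := ⟨2*j.1+1, by have := j.2; omega⟩
def tIdx (n : ℕ) : Fin (2*n+1) := ⟨2*n, by omega⟩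
def xIdx2 (n : ℕ) (j : Fin n) : Fin (2*n) := ⟨2*j.1, by have := j.2; omega⟩
def yIdx2 (n : ℕ) (j : Fin n) : Fin (2*n) := ⟨2*j.1+1, by have := j.2; omega⟩

/-- The Korányi distance on the Heisenberg group `ℍ^n = ℝ^{2n+1}`. -/
def dK (n : ℕ) (p q : Heis n) : ℝ :=
  ((∑ j : Fin n, ((p (xIdx n j) - q (xIdx n j))^2 + (p (yIdx n j) - q (yIdx n j))^2))^2
    + (p (tIdx n) - q (tIdx n)
        + 2 * ∑ j : Fin n, (q (xIdx n j) * p (yIdx n j) - p (xIdx n j) * q (yIdx n j)))^2)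
    ^ ((1:ℝ)/4)

/-- The kernel of the standard contact form `α = dt + 2∑ (x_j dy_j − y_j dx_j)` at `p`. -/
def kerAlpha (n : ℕ) (p : Heis n) : Set (Heis n) :=
  {v | v (tIdx n)
    + 2 * ∑ j : Fin n, (p (xIdx n j) * v (yIdx n j) - p (yIdx n j) * v (xIdx n j)) = 0}

/-- The standard symplectic form on `ℝ^{2n}`. -/
def omegaF (n : ℕ) (v w : Horiz n) : ℝ :=
  ∑ j : Fin n, (v (xIdx2 n j) * w (yIdx2 n j) - v (yIdx2 n j) * w (xIdx2 n j))

/-- The projection `π : ℝ^{2n+1} → ℝ^{2n}` forgetting the `t`-coordinate. -/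
def piH (n : ℕ) (p : Heis n) : Horiz n :=
  (EuclideanSpace.equiv (Fin (2*n)) ℝ).symm (fun i => p ⟨i.1, by have := i.2; omega⟩)

/-- Diameter of a set with respect to the Korányi distance, as an extended real. -/
def kDiam (n : ℕ) (U : Set (Heis n)) : ℝ≥0∞ :=
  ⨆ p ∈ U, ⨆ q ∈ U, ENNReal.ofReal (dK n p q)

/-- `S` is null for the `k`-dimensional Hausdorff measure built from the Korányi
distance: its `k`-dimensional Hausdorff content is arbitrarily small. -/
def IsHausdorffNullK (n k : ℕ) (S : Set (Heis n)) : Prop :=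
  ∀ ε : ℝ≥0∞, 0 < ε → ∃ U : ℕ → Set (Heis n),
    (S ⊆ ⋃ i, U i) ∧ ∑' i, (kDiam n (U i)) ^ k < ε

/-- `f` is Lipschitz on `E` as a map into `(ℝ^{2n+1}, d_K)`. -/
def LipschitzOnK (n : ℕ) {k : ℕ} (f : EuclideanSpace ℝ (Fin k) → Heis n)
    (E : Set (EuclideanSpace ℝ (Fin k))) : Prop :=
  ∃ L : ℝ, 0 ≤ L ∧ ∀ x ∈ E, ∀ y ∈ E, dK n (f x) (f y) ≤ L * dist x y

end

open Filter Asymptotics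
open scoped Topology Pointwise

section DensityPoint

variable {F : Type*} [NormedAddCommGroup F] [NormedSpace ℝ F] [FiniteDimensional ℝ F]
  [MeasurableSpace F] [BorelSpace F] (μ : Measure F) [μ.IsAddHaarMeasure]

theorem frequently_add_smul_mem_of_density_one {s : Set F} {x : F}
    (h : Tendsto (fun r ↦ μ (s ∩ closedBall x r) / μ (closedBall x r)) (𝓝[>] 0) (𝓝 1)) (v : F) :
    ∃ᶠ a : ℝ × F in 𝓝[>] 0 ×ˢ 𝓝 v, x + a.1 • a.2 ∈ s := by
  intro hnot
  obtain ⟨P, hP, Q, hQ, hPQ⟩ := eventually_prod_iff.1 hnot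
  obtain ⟨ε, hε, hεQ⟩ := nhds_basis_closedBall.eventually_iff.1 hQ
  have hmeet : ∀ᶠ r in 𝓝[>] (0 : ℝ), (s ∩ ({x} + r • closedBall v ε)).Nonempty :=
    Measure.eventually_nonempty_inter_smul_of_density_one μ s x h _ measurableSet_closedBall
      (measure_closedBall_pos μ v hε).ne'
  obtain ⟨r, hr, y, hys, hy⟩ := (hP.and hmeet).exists
  rw [singleton_add] at hy
  obtain ⟨_, ⟨w, hw, rfl⟩, rfl⟩ := hy
  exact hPQ hr (hεQ hw) hys

theorem tangentConeAt_eq_univ_of_density_one {s : Set F} {x : F}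
    (h : Tendsto (fun r ↦ μ (s ∩ closedBall x r) / μ (closedBall x r)) (𝓝[>] 0) (𝓝 1)) :
    tangentConeAt ℝ s x = univ := by
  refine eq_univ_of_forall fun v ↦ ?_
  have hr : Tendsto Prod.fst (𝓝[>] (0 : ℝ) ×ˢ 𝓝 v) (𝓝[>] 0) := tendsto_fst
  have hw : Tendsto Prod.snd (𝓝[>] (0 : ℝ) ×ˢ 𝓝 v) (𝓝 v) := tendsto_snd
  refine mem_tangentConeAt_of_frequently _ (fun a : ℝ × F ↦ a.1⁻¹)
    (fun a ↦ a.1 • a.2) ?_ (frequently_add_smul_mem_of_density_one μ h v) ?_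
  · simpa using (hr.mono_right nhdsWithin_le_nhds).smul hw
  · refine hw.congr' ?_
    filter_upwards [hr.eventually self_mem_nhdsWithin] with a ha
    exact (inv_smul_smul₀ (ne_of_gt ha) a.2).symm

theorem uniqueDiffWithinAt_of_density_one {s : Set F} {x : F}
    (h : Tendsto (fun r ↦ μ (s ∩ closedBall x r) / μ (closedBall x r)) (𝓝[>] 0) (𝓝 1)) :
    UniqueDiffWithinAt ℝ s x := by
  have hcone := tangentConeAt_eq_univ_of_density_one μ h
  refine ⟨by simp [hcone], mem_closure_of_nonempty_tangentConeAt (𝕜 := ℝ) ?_⟩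
  exact hcone ▸ univ_nonempty

theorem ae_restrict_uniqueDiffWithinAt (s : Set F) :
    ∀ᵐ x ∂μ.restrict s, UniqueDiffWithinAt ℝ s x := by
  filter_upwards [Besicovitch.ae_tendsto_measure_inter_div μ s] with x hx
  exact uniqueDiffWithinAt_of_density_one μ hx

end DensityPoint

theorem comp_eq_zero_of_isLittleO_comp_sub {𝕜 F G H : Type*} [NontriviallyNormedField 𝕜]
    [NormedAddCommGroup F] [NormedSpace 𝕜 F] [NormedAddCommGroup G] [NormedSpace 𝕜 G]
    [NormedAddCommGroup H] [NormedSpace 𝕜 H] {f : F → G} {f' : F →L[𝕜] G} {s : Set F} {x : F}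
    (φ : G →L[𝕜] H) (hs : UniqueDiffWithinAt 𝕜 s x) (hf : HasFDerivWithinAt f f' s x)
    (hφ : (fun y ↦ φ (f y - f x)) =o[𝓝[s] x] fun y ↦ y - x) : φ ∘L f' = 0 := by
  have hzero : HasFDerivWithinAt (φ ∘ f) (0 : F →L[𝕜] H) s x := by
    simpa [hasFDerivWithinAt_iff_isLittleO] using hφ
  exact hs.eq (φ.hasFDerivAt.comp_hasFDerivWithinAt x hf) hzero

/-- The standard contact form `α = dt + 2∑ (x_j dy_j − y_j dx_j)` at `q`, as a continuous linear
functional; its kernel is the horizontal space `kerAlpha n q`. -/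
noncomputable def contactForm (n : ℕ) (q : Heis n) : Heis n →L[ℝ] ℝ :=
  EuclideanSpace.proj (tIdx n) + (2 : ℝ) • ∑ j : Fin n,
    (q (xIdx n j) • EuclideanSpace.proj (yIdx n j) - q (yIdx n j) • EuclideanSpace.proj (xIdx n j))

section Koranyi

variable {n : ℕ}

theorem contactForm_apply (q v : Heis n) :
    contactForm n q v = v (tIdx n)
      + 2 * ∑ j : Fin n, (q (xIdx n j) * v (yIdx n j) - q (yIdx n j) * v (xIdx n j)) := by
  simp [contactForm, sum_apply]

theorem mem_kerAlpha_iff {q v : Heis n} : v ∈ kerAlpha n q ↔ contactForm n q v = 0 := by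
  rw [contactForm_apply]
  rfl

theorem contactForm_apply_sub (p q : Heis n) :
    contactForm n q (p - q) = p (tIdx n) - q (tIdx n)
      + 2 * ∑ j : Fin n, (q (xIdx n j) * p (yIdx n j) - p (xIdx n j) * q (yIdx n j)) := by
  simp only [contactForm_apply, PiLp.sub_apply]
  congr 3 with j
  ring

theorem dK_nonneg (p q : Heis n) : 0 ≤ dK n p q := by
  unfold dK
  positivity

theorem dK_pow_four (p q : Heis n) :
    dK n p q ^ 4 =
      (∑ j : Fin n, ((p (xIdx n j) - q (xIdx n j)) ^ 2 + (p (yIdx n j) - q (yIdx n j)) ^ 2)) ^ 2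
        + contactForm n q (p - q) ^ 2 := by
  rw [contactForm_apply_sub, dK, ← Real.rpow_mul_natCast (by positivity)]
  norm_num

theorem abs_contactForm_sub_le_dK_sq (p q : Heis n) :
    |contactForm n q (p - q)| ≤ dK n p q ^ 2 := by
  refine abs_le_of_sq_le_sq ?_ (sq_nonneg _)
  calc contactForm n q (p - q) ^ 2 ≤ dK n p q ^ 4 :=
        dK_pow_four p q ▸ le_add_of_nonneg_left (sq_nonneg _)
    _ = (dK n p q ^ 2) ^ 2 := by ring

theorem contactForm_comp_eq_zero_of_isLittleO {F : Type*} [NormedAddCommGroup F] [NormedSpace ℝ F]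
    {f : F → Heis n} {f' : F →L[ℝ] Heis n} {s : Set F} {x : F} (hs : UniqueDiffWithinAt ℝ s x)
    (hf : HasFDerivWithinAt f f' s x)
    (hd : (fun y ↦ dK n (f y) (f x) ^ 2) =o[𝓝[s] x] fun y ↦ y - x) :
    contactForm n (f x) ∘L f' = 0 :=
  comp_eq_zero_of_isLittleO_comp_sub _ hs hf <|
    (IsBigO.of_norm_le fun y ↦ abs_contactForm_sub_le_dK_sq (f y) (f x)).trans_isLittleO hd

theorem LipschitzOnK.isLittleO_dK_sq {k : ℕ} {f : EuclideanSpace ℝ (Fin k) → Heis n}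
    {E : Set (EuclideanSpace ℝ (Fin k))} (hf : LipschitzOnK n f E)
    {x : EuclideanSpace ℝ (Fin k)} (hx : x ∈ E) :
    (fun y ↦ dK n (f y) (f x) ^ 2) =o[𝓝[E] x] fun y ↦ y - x := by
  obtain ⟨L, -, hL⟩ := hf
  have hbound : (fun y ↦ dK n (f y) (f x)) =O[𝓝[E] x] fun y ↦ ‖y - x‖ := by
    refine .of_bound L ?_
    filter_upwards [self_mem_nhdsWithin] with y hy
    simpa [abs_of_nonneg (dK_nonneg _ _), dist_eq_norm] using hL y hy x hx
  exact (hbound.pow 2).trans_isLittleO <|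
    (isLittleO_pow_sub_sub x one_lt_two).mono nhdsWithin_le_nhds

end Koranyi

theorem image_fderiv_horizontal_of_lipschitz_heisenberg_general {n : ℕ} {F : Type*}
    [NormedAddCommGroup F] [NormedSpace ℝ F] [FiniteDimensional ℝ F] [MeasurableSpace F]
    [BorelSpace F] (μ : Measure F) [μ.IsAddHaarMeasure] {s : Set F} {f : F → Heis n}
    {f' : F → F →L[ℝ] Heis n} (hf : ∀ x ∈ s, HasFDerivWithinAt f (f' x) s x)
    (hd : ∀ x ∈ s, (fun y ↦ dK n (f y) (f x) ^ 2) =o[𝓝[s] x] fun y ↦ y - x) :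
    ∀ᵐ x ∂μ, x ∈ s → ∀ v, f' x v ∈ kerAlpha n (f x) := by
  filter_upwards [ae_imp_of_ae_restrict (ae_restrict_uniqueDiffWithinAt μ s)] with x hunique hx v
  have hzero := contactForm_comp_eq_zero_of_isLittleO (hunique hx) (hf x hx) (hd x hx)
  exact mem_kerAlpha_iff.2 (DFunLike.congr_fun hzero v)

/-- If `f : E → (ℝ^{2n+1}, d_K)` is Lipschitz, `K ⊆ E` is measurable
and `g : ℝ^k → ℝ^{2n+1}` is a `C¹` map agreeing with `f` on `K`, then for a.e. `x ∈ K`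
the image of `Dg_x` is contained in the horizontal space `ker α(f(x))`. -/
theorem image_fderiv_horizontal_of_lipschitz_heisenberg (n k : ℕ) (hn : 0 < n) (hk : 0 < k)
    (E : Set (EuclideanSpace ℝ (Fin k))) (hE : MeasurableSet E)
    (f : EuclideanSpace ℝ (Fin k) → Heis n)
    (hf : LipschitzOnK n f E)
    (K : Set (EuclideanSpace ℝ (Fin k))) (hKE : K ⊆ E) (hK : MeasurableSet K)
    (g : EuclideanSpace ℝ (Fin k) → Heis n) (hg : ContDiff ℝ 1 g)
    (hfg : Set.EqOn g f K) :
    ∀ᵐ x, x ∈ K → ∀ v, fderiv ℝ g x v ∈ kerAlpha n (f x) :=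
  image_fderiv_horizontal_of_lipschitz_heisenberg_general volume
    (fun x hx ↦ ((hg.differentiable one_ne_zero x).hasFDerivAt.hasFDerivWithinAt).congr
      (fun _ hy ↦ (hfg hy).symm) (hfg hx).symm)
    fun _ hx ↦ (hf.isLittleO_dK_sq (hKE hx)).mono (nhdsWithin_mono _ hKE)
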